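/- arXiv:math/0211450 — 8 statements merged into one kernel-verified Lean document; each statement's English description precedes it below -/
import Mathlib

section
/- Let G be a finite group and σ : G → Aut(𝒮^N) a group homomorphism into linear isometries (for the trace inner product) of the space of real symmetric N×N matrices, such that σ(g) maps positive semidefinite matrices to positive semidefinite matrices for every g. Let 𝓛 ⊆ 𝒮^N be an affine subspace and C ∈ 𝒮^N, and assume the semidefinite program is invariant: the feasible set 𝓛 ∩ 𝒮₊^N is invariant under every σ(g), and ⟨C, σ(g)(X)⟩ = ⟨C, X⟩ for all g ∈ G and all feasible X. Let 𝓕 := { X ∈ 𝒮^N : σ(g)(X) = X for all g ∈ G } be the fixed-point subspace. Then the optimal values of the original and the restricted semidefinite programs coincide: inf { ⟨C, X⟩ : X ∈ 𝓛 ∩ 𝒮₊^N } = inf { ⟨C, X⟩ : X ∈ 𝓕 ∩ 𝓛 ∩ 𝒮₊^N }. -/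
/-!
The averaging (Reynolds operator) argument: for a feasible `X`, the orbit average
`|G|⁻¹ ∑ g, σ g X` is a convex combination of the feasible points `σ g X`, so it is feasible
because an affine subspace and the positive semidefinite cone are both convex. It is fixed by `σ`
because left translation permutes `G`, and it has the same cost as `X` because the cost is linear
and constant on the orbit. Hence every cost value attained on the feasible set is already attained
on its fixed points, and the two sets of attained values, not merely their infima, are equal.
-/

/-- The space `𝒮^N` of real symmetric `N×N` matrices, as a submodule of the matrix space. -/
def symMatrices (N : ℕ) : Submodule ℝ (Matrix (Fin N) (Fin N) ℝ) where
  carrier := {A | A.IsSymm}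
  add_mem' := fun ha hb => by
    simp only [Set.mem_setOf_eq, Matrix.IsSymm] at *
    rw [Matrix.transpose_add, ha, hb]
  zero_mem' := Matrix.isSymm_zero
  smul_mem' := fun c A hA => by
    simp only [Set.mem_setOf_eq, Matrix.IsSymm] at *
    rw [Matrix.transpose_smul, hA]

/-- The trace inner product `⟨A, B⟩ = trace (A * B)` on `𝒮^N`. -/
noncomputable def symInner {N : ℕ} (A B : symMatrices N) : ℝ :=
  Matrix.trace ((A : Matrix (Fin N) (Fin N) ℝ) * (B : Matrix (Fin N) (Fin N) ℝ))

/-- The cost functional `X ↦ ⟨C, X⟩` as a linear map. -/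
noncomputable def symInnerLinear {N : ℕ} (C : symMatrices N) : symMatrices N →ₗ[ℝ] ℝ where
  toFun := symInner C
  map_add' X Y := by simp [symInner, mul_add]
  map_smul' c X := by simp [symInner]

/-- The average of the orbit of `X` under `σ`, i.e. the Reynolds operator applied to `X`. -/
noncomputable def orbitAverage {G : Type*} [Group G] [Fintype G] {N : ℕ}
    (σ : G →* (symMatrices N ≃ₗ[ℝ] symMatrices N)) (X : symMatrices N) : symMatrices N :=
  ∑ g : G, (Fintype.card G : ℝ)⁻¹ • σ g X

theorem map_orbitAverage {G : Type*} [Group G] [Fintype G] {N : ℕ}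
    (σ : G →* (symMatrices N ≃ₗ[ℝ] symMatrices N)) (X : symMatrices N) (h : G) :
    σ h (orbitAverage σ X) = orbitAverage σ X := by
  simp only [orbitAverage, map_sum, map_smul]
  refine Fintype.sum_equiv (Equiv.mulLeft h) _ _ fun g => ?_
  simp [LinearEquiv.mul_apply]

theorem sum_inv_card (G : Type*) [Group G] [Fintype G] :
    ∑ _g : G, (Fintype.card G : ℝ)⁻¹ = 1 := by
  simp

theorem orbitAverage_mem {G : Type*} [Group G] [Fintype G] {N : ℕ}
    (σ : G →* (symMatrices N ≃ₗ[ℝ] symMatrices N)) (X : symMatrices N)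
    (𝓛 : AffineSubspace ℝ (symMatrices N)) (hX : ∀ g, σ g X ∈ 𝓛) :
    orbitAverage σ X ∈ 𝓛 :=
  𝓛.convex.sum_mem (fun _ _ => by positivity) (sum_inv_card G) fun g _ => hX g

theorem posSemidef_orbitAverage {G : Type*} [Group G] [Fintype G] {N : ℕ}
    (σ : G →* (symMatrices N ≃ₗ[ℝ] symMatrices N)) (X : symMatrices N)
    (hX : ∀ g, ((σ g X : symMatrices N) : Matrix (Fin N) (Fin N) ℝ).PosSemidef) :
    ((orbitAverage σ X : symMatrices N) : Matrix (Fin N) (Fin N) ℝ).PosSemidef := by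
  simp only [orbitAverage, Submodule.coe_sum, Submodule.coe_smul]
  exact Matrix.posSemidef_sum _ fun g _ => (hX g).smul (by positivity)

theorem symInner_orbitAverage {G : Type*} [Group G] [Fintype G] {N : ℕ}
    (σ : G →* (symMatrices N ≃ₗ[ℝ] symMatrices N)) (C X : symMatrices N)
    (hX : ∀ g, symInner C (σ g X) = symInner C X) :
    symInner C (orbitAverage σ X) = symInner C X := by
  change symInnerLinear C (orbitAverage σ X) = _
  have hX' : ∀ g, symInnerLinear C (σ g X) = symInner C X := hX
  simp only [orbitAverage, map_sum, map_smul, hX', ← Finset.sum_smul, sum_inv_card, one_smul]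

/-- For an invariant semidefinite program — a finite group `G` acting on `𝒮^N` by a
homomorphism `σ` into linear automorphisms that are isometries for the trace inner product
and preserve positive semidefiniteness, an affine subspace `𝓛` whose feasible set
`𝓛 ∩ 𝒮₊^N` is `σ`-invariant, and a cost matrix `C` whose cost is `σ`-invariant on the
feasible set — the optimal value is unchanged when the feasible set is restricted to the
fixed-point subspace `𝓕 = {X : σ(g)(X) = X ∀g}` (infima taken in the extended reals). -/
theorem invariant_sdp_fixed_point_restriction
    {G : Type*} [Group G] [Fintype G] (N : ℕ)
    (σ : G →* (symMatrices N ≃ₗ[ℝ] symMatrices N))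
    (hiso : ∀ (g : G) (X Y : symMatrices N), symInner (σ g X) (σ g Y) = symInner X Y)
    (hPSD : ∀ (g : G) (X : symMatrices N),
      (X : Matrix (Fin N) (Fin N) ℝ).PosSemidef →
        ((σ g X : symMatrices N) : Matrix (Fin N) (Fin N) ℝ).PosSemidef)
    (𝓛 : AffineSubspace ℝ (symMatrices N))
    (hFeas : ∀ (g : G) (X : symMatrices N),
      X ∈ 𝓛 → (X : Matrix (Fin N) (Fin N) ℝ).PosSemidef → σ g X ∈ 𝓛)
    (C : symMatrices N)
    (hC : ∀ (g : G) (X : symMatrices N),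
      X ∈ 𝓛 → (X : Matrix (Fin N) (Fin N) ℝ).PosSemidef →
        symInner C (σ g X) = symInner C X) :
    sInf ((fun X : symMatrices N => (symInner C X : EReal)) ''
        {X | X ∈ 𝓛 ∧ (X : Matrix (Fin N) (Fin N) ℝ).PosSemidef}) =
    sInf ((fun X : symMatrices N => (symInner C X : EReal)) ''
        {X | X ∈ 𝓛 ∧ (X : Matrix (Fin N) (Fin N) ℝ).PosSemidef ∧
          ∀ g : G, σ g X = X}) := by
  congr 1
  apply Set.Subset.antisymm
  · rintro _ ⟨X, ⟨hL, hP⟩, rfl⟩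
    refine ⟨orbitAverage σ X, ⟨orbitAverage_mem σ X 𝓛 fun g => hFeas g X hL hP,
      posSemidef_orbitAverage σ X fun g => hPSD g X hP, map_orbitAverage σ X⟩, ?_⟩
    simp only [symInner_orbitAverage σ C X fun g => hC g X hL hP]
  · exact Set.image_mono fun X hX => ⟨hX.1, hX.2.1⟩
end

section
/- Let G be a finite group and ρ : G → GL(ℝ^N) a group homomorphism with each ρ(g) orthogonal (ρ(g)ᵀρ(g) = I_N), and let σ(g)(X) := ρ(g)ᵀ X ρ(g) be the induced action on real symmetric N×N matrices. Let 𝓛 ⊆ 𝒮^N be an affine subspace and C ∈ 𝒮^N such that the feasible set 𝓛 ∩ 𝒮₊^N is invariant under every σ(g) and ⟨C, σ(g)(X)⟩ = ⟨C, X⟩ for all g ∈ G and all feasible X. Then inf { ⟨C, X⟩ : X ∈ 𝓛 ∩ 𝒮₊^N } = inf { ⟨C, X⟩ : X ∈ 𝓛 ∩ 𝒮₊^N and ρ(g) X = X ρ(g) for all g ∈ G }; that is, the semidefinite program may be restricted to the commutant of the representation without changing its optimal value. -/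
/-!
The proof is the Reynolds-operator argument. For a feasible `X`, the average `reynolds ρ X` of its
orbit under `X ↦ ρ(g)ᵀ X ρ(g)` is a convex combination of feasible points, hence feasible; it has
the same cost as `X` because every point of the orbit does; and it is fixed by the action
(`conj_reynolds`), which for orthogonal `ρ(g)` means that it commutes with the representation
(`commute_reynolds`). So each value attained by the program is attained on the commutant, and the
two sets of attained costs coincide.
-/

open Matrix

/-- The orbit average `|G|⁻¹ ∑ g, ρ(g)ᵀ X ρ(g)`, with the weight placed inside the sum so that it is
literally a convex combination. -/
noncomputable def reynolds {G : Type*} [Fintype G] {N : ℕ}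
    (ρ : G → Matrix (Fin N) (Fin N) ℝ) (X : Matrix (Fin N) (Fin N) ℝ) :
    Matrix (Fin N) (Fin N) ℝ :=
  ∑ g : G, (Fintype.card G : ℝ)⁻¹ • ((ρ g)ᵀ * X * ρ g)

lemma conj_reynolds {G : Type*} [Group G] [Fintype G] {N : ℕ}
    {ρ : G → Matrix (Fin N) (Fin N) ℝ} (hρmul : ∀ g h : G, ρ (g * h) = ρ g * ρ h)
    (X : Matrix (Fin N) (Fin N) ℝ) (h : G) :
    (ρ h)ᵀ * reynolds ρ X * ρ h = reynolds ρ X := by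
  unfold reynolds
  rw [Finset.mul_sum, Finset.sum_mul]
  -- Conjugating by `ρ h` sends the term of `g` to that of `g * h`.
  refine Fintype.sum_equiv (Equiv.mulRight h) _ _ fun g => ?_
  simp [hρmul, Matrix.transpose_mul, Matrix.mul_assoc]

lemma commute_reynolds {G : Type*} [Group G] [Fintype G] {N : ℕ}
    {ρ : G → Matrix (Fin N) (Fin N) ℝ} (hρmul : ∀ g h : G, ρ (g * h) = ρ g * ρ h)
    (hρorth : ∀ g : G, (ρ g)ᵀ * ρ g = 1)
    (X : Matrix (Fin N) (Fin N) ℝ) (h : G) :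
    ρ h * reynolds ρ X = reynolds ρ X * ρ h := by
  have h1 : ρ h * (ρ h)ᵀ = 1 := mul_eq_one_comm.mp (hρorth h)
  conv_lhs => rw [← conj_reynolds hρmul X h]
  rw [← Matrix.mul_assoc, ← Matrix.mul_assoc, h1, Matrix.one_mul]

lemma posSemidef_reynolds {G : Type*} [Fintype G] {N : ℕ}
    (ρ : G → Matrix (Fin N) (Fin N) ℝ) {X : Matrix (Fin N) (Fin N) ℝ} (hX : X.PosSemidef) :
    (reynolds ρ X).PosSemidef := by
  refine Matrix.posSemidef_sum _ fun g _ => Matrix.PosSemidef.smul ?_ (by positivity)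
  simpa [Matrix.conjTranspose_eq_transpose_of_trivial] using hX.conjTranspose_mul_mul_same (ρ g)

/-- Let `ρ : G → O(N)` be an orthogonal representation of a finite group `G` and let
`σ(g)(X) = ρ(g)ᵀ X ρ(g)` be the induced action on real symmetric `N×N` matrices.  For an
invariant semidefinite program — an affine subspace `𝓛` of symmetric matrices whose
feasible set `𝓛 ∩ 𝒮₊^N` is `σ`-invariant, and a symmetric cost matrix `C` whose cost
`⟨C, X⟩ = trace(C X)` is `σ`-invariant on the feasible set — the optimal value is unchanged
when the program is restricted to the commutant `{X : ρ(g) X = X ρ(g) ∀g}` of the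
representation (infima taken in the extended reals). -/
theorem invariant_sdp_commutant_restriction
    {G : Type*} [Group G] [Fintype G] (N : ℕ)
    (ρ : G → Matrix (Fin N) (Fin N) ℝ)
    (hρ1 : ρ 1 = 1)
    (hρmul : ∀ g h : G, ρ (g * h) = ρ g * ρ h)
    (hρorth : ∀ g : G, (ρ g)ᵀ * ρ g = 1)
    (𝓛 : AffineSubspace ℝ (Matrix (Fin N) (Fin N) ℝ))
    (h𝓛sym : ∀ X ∈ 𝓛, Matrix.IsSymm X)
    (C : Matrix (Fin N) (Fin N) ℝ) (hCsym : C.IsSymm)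
    (hFeas : ∀ (g : G) (X : Matrix (Fin N) (Fin N) ℝ),
      X ∈ 𝓛 → X.PosSemidef → (ρ g)ᵀ * X * ρ g ∈ 𝓛)
    (hCost : ∀ (g : G) (X : Matrix (Fin N) (Fin N) ℝ),
      X ∈ 𝓛 → X.PosSemidef →
        Matrix.trace (C * ((ρ g)ᵀ * X * ρ g)) = Matrix.trace (C * X)) :
    sInf ((fun X : Matrix (Fin N) (Fin N) ℝ => ((Matrix.trace (C * X) : ℝ) : EReal)) ''
        {X | X ∈ 𝓛 ∧ X.PosSemidef}) =
    sInf ((fun X : Matrix (Fin N) (Fin N) ℝ => ((Matrix.trace (C * X) : ℝ) : EReal)) ''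
        {X | X ∈ 𝓛 ∧ X.PosSemidef ∧ ∀ g : G, ρ g * X = X * ρ g}) := by
  congr 1
  refine Set.Subset.antisymm ?_ (Set.image_mono fun X hX => ⟨hX.1, hX.2.1⟩)
  rintro _ ⟨X, ⟨hX, hpsd⟩, rfl⟩
  have hcard : (Fintype.card G : ℝ) ≠ 0 := by simp
  refine ⟨reynolds ρ X, ⟨?_, posSemidef_reynolds ρ hpsd, commute_reynolds hρmul hρorth X⟩, ?_⟩
  · exact 𝓛.convex.sum_mem (fun _ _ => by positivity) (by simp [hcard])
      fun g _ => hFeas g X hX hpsd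
  · have : Matrix.trace (C * reynolds ρ X) = Matrix.trace (C * X) := by
      simp only [reynolds, Finset.mul_sum, Matrix.trace_sum, Matrix.mul_smul, Matrix.trace_smul,
        hCost _ X hX hpsd]
      simp [hcard]
    simp only [this]
end

section
/- Let G be a subgroup of the symmetric group on {1,…,n}, acting on ℝ[x₁,…,xₙ] by permuting the variables, and let f ∈ ℝ[x₁,…,xₙ] be G-invariant of degree at most 2d. Let M be the set of monomials in x₁,…,xₙ of degree at most d; G acts on M by permuting variables. If f is a sum of squares of polynomials, then there exists a real symmetric positive semidefinite matrix Q indexed by M × M such that f = Σ_{(m,m') ∈ M×M} Q_{m,m'} · m · m' and Q is invariant under the group action on its indices: Q_{g·m, g·m'} = Q_{m,m'} for all g ∈ G and all m, m' ∈ M. -/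
/-!
In a sum of squares `f = ∑ pᵢ²` over `ℝ` the leading forms cannot cancel: if every `pᵢ` has degree
at most `D`, the component of `f` of degree `2D` is the sum of the squares of the degree-`D`
components of the `pᵢ`, and it vanishes only if each of these does. Hence `deg f ≤ 2d` forces
`deg pᵢ ≤ d` (`totalDegree_le_of_sum_sq`), and each `pᵢ` is a combination of the monomials indexed
by `MonIdx n d`. With `aᵢ` the coefficient vector of `pᵢ`, the matrix `∑ᵢ aᵢ aᵢᵀ` is a positive
semidefinite Gram matrix of `f`. Averaging it over `G` keeps it positive semidefinite, makes it
invariant, and still represents `f`, because translating the indices by `g` turns `∑ pᵢ²` into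
`g⁻¹ · f = f`.
-/

open MvPolynomial

/-- The index set of monomials in `n` variables of total degree at most `d`:
exponent vectors `α : Fin n → Fin (d+1)` with `Σᵢ αᵢ ≤ d`. -/
def MonIdx (n d : ℕ) : Type := {α : Fin n → Fin (d + 1) // (∑ i, (α i : ℕ)) ≤ d}

instance (n d : ℕ) : Fintype (MonIdx n d) := Subtype.fintype _

instance (n d : ℕ) : DecidableEq (MonIdx n d) := Subtype.instDecidableEq

/-- The monomial `x^α` corresponding to an index `α ∈ MonIdx n d`. -/
noncomputable def monOf {n d : ℕ} (m : MonIdx n d) : MvPolynomial (Fin n) ℝ :=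
  ∏ i, (X i) ^ (m.val i : ℕ)

/-- The action of a permutation `g` of the variables on a monomial index:
the exponent vector is permuted, `(g·α)ᵢ = α_{g⁻¹ i}`. -/
def permMon {n d : ℕ} (g : Equiv.Perm (Fin n)) (m : MonIdx n d) : MonIdx n d :=
  ⟨fun i => m.val (g.symm i), by
    have h := Equiv.sum_comp g.symm (fun j => (m.val j : ℕ))
    simpa [h] using m.property⟩

/-- The exponent vector of a monomial index, as a finitely supported function. -/
noncomputable def MonIdx.toFinsupp {n d : ℕ} (m : MonIdx n d) : Fin n →₀ ℕ :=
  Finsupp.equivFunOnFinite.symm fun i => (m.val i : ℕ)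

lemma MonIdx.toFinsupp_injective {n d : ℕ} :
    Function.Injective (MonIdx.toFinsupp : MonIdx n d → Fin n →₀ ℕ) := by
  intro m m' h
  apply Subtype.ext
  funext i
  exact Fin.ext (DFunLike.congr_fun h i)

lemma monOf_eq_monomial {n d : ℕ} (m : MonIdx n d) :
    monOf m = monomial m.toFinsupp (1 : ℝ) := by
  rw [monomial_eq, Finsupp.prod_fintype _ _ (by simp)]
  simp [monOf, MonIdx.toFinsupp]

lemma rename_monOf {n d : ℕ} (g : Equiv.Perm (Fin n)) (m : MonIdx n d) :
    rename (⇑g) (monOf m) = monOf (permMon g m) := by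
  simp only [monOf, permMon, map_prod, map_pow, rename_X]
  rw [← Equiv.prod_comp g (fun i => (X i : MvPolynomial (Fin n) ℝ) ^ (m.val (g.symm i) : ℕ))]
  refine Finset.prod_congr rfl fun i _ => ?_
  rw [Equiv.symm_apply_apply]

lemma permMon_mul {n d : ℕ} (g h : Equiv.Perm (Fin n)) (m : MonIdx n d) :
    permMon (g * h) m = permMon g (permMon h m) := rfl

/-- The permutation of monomial indices induced by a permutation of the variables. -/
def permMonEquiv {n : ℕ} (d : ℕ) (g : Equiv.Perm (Fin n)) : MonIdx n d ≃ MonIdx n d where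
  toFun := permMon g
  invFun := permMon g⁻¹
  left_inv m := by rw [← permMon_mul, inv_mul_cancel]; rfl
  right_inv m := by rw [← permMon_mul, mul_inv_cancel]; rfl

lemma sum_coeff_mul_monOf {n d : ℕ} (p : MvPolynomial (Fin n) ℝ) (hp : p.totalDegree ≤ d) :
    ∑ m : MonIdx n d, C (coeff m.toFinsupp p) * monOf m = p := by
  ext s
  simp only [monOf_eq_monomial, C_mul_monomial, mul_one, coeff_sum, coeff_monomial]
  by_cases hs : s ∈ p.support
  · have hsum : ∑ i, s i ≤ d := by
      have h := (le_totalDegree hs).trans hp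
      rwa [Finsupp.sum_fintype _ _ (by simp)] at h
    have hlt : ∀ i, s i < d + 1 := fun i =>
      Nat.lt_succ_of_le ((Finset.single_le_sum (f := fun i => s i) (fun _ _ => Nat.zero_le _)
        (Finset.mem_univ i)).trans hsum)
    let m₀ : MonIdx n d := ⟨fun i => ⟨s i, hlt i⟩, hsum⟩
    have hm₀ : m₀.toFinsupp = s := by ext i; rfl
    rw [Finset.sum_eq_single m₀]
    · rw [if_pos hm₀, hm₀]
    · intro m _ hm
      exact if_neg fun h => hm (MonIdx.toFinsupp_injective (h.trans hm₀.symm))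
    · simp
  · rw [notMem_support_iff] at hs
    rw [hs]
    refine Finset.sum_eq_zero fun m _ => ?_
    split_ifs with h
    · rw [h, hs]
    · rfl

/-- Translating the index of the coefficient vector of `p` by `g` gives that of `g⁻¹ · p`. -/
lemma sum_coeff_permMon_mul_monOf {n d : ℕ} (g : Equiv.Perm (Fin n))
    (p : MvPolynomial (Fin n) ℝ) (hp : p.totalDegree ≤ d) :
    ∑ m : MonIdx n d, C (coeff (permMon g m).toFinsupp p) * monOf m
      = rename (⇑g⁻¹) p := by
  conv_rhs => rw [← sum_coeff_mul_monOf p hp, map_sum, ← Equiv.sum_comp (permMonEquiv d g)]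
  refine Finset.sum_congr rfl fun m _ => ?_
  rw [map_mul, rename_C, rename_monOf]
  congr 2
  exact ((permMonEquiv d g).symm_apply_apply m).symm

lemma homogeneousComponent_two_mul_sq {n D : ℕ} (hD : 0 < D) (p : MvPolynomial (Fin n) ℝ)
    (hp : p.totalDegree ≤ D) :
    homogeneousComponent (2 * D) (p ^ 2) = homogeneousComponent D p ^ 2 := by
  set h := homogeneousComponent D p with hh
  have hhom : h.IsHomogeneous D := homogeneousComponent_isHomogeneous D p
  set r := p - h with hr
  have hr_lt : r.totalDegree < D := by
    rw [totalDegree, Finset.sup_lt_iff hD]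
    intro s hs
    by_contra! hle
    rw [mem_support_iff] at hs
    apply hs
    rw [hr, coeff_sub, hh, coeff_homogeneousComponent]
    split_ifs with hdeg
    · simp
    · rw [sub_zero]
      apply coeff_eq_zero_of_totalDegree_lt
      refine hp.trans_lt (lt_of_le_of_ne hle fun he => hdeg ?_)
      rw [he]
      rfl
  have hpe : p ^ 2 = h ^ 2 + r * (2 * h + r) := by rw [hr]; ring
  have h2 : (h ^ 2).IsHomogeneous (2 * D) := by
    rw [mul_comm]; exact hhom.pow 2
  have hlow : (r * (2 * h + r)).totalDegree < 2 * D := by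
    have h1 := totalDegree_mul r (2 * h + r)
    have h3 := totalDegree_add (2 * h) r
    have h4 : (2 * h).totalDegree ≤ D := by
      rw [two_mul]
      exact (totalDegree_add h h).trans (by simpa using hhom.totalDegree_le)
    have h5 := max_le h4 hr_lt.le
    omega
  rw [hpe, map_add, homogeneousComponent_eq_zero _ _ hlow, add_zero,
    homogeneousComponent_of_mem h2, if_pos rfl]

lemma eq_zero_of_sum_sq_eq_zero {n N : ℕ} (p : Fin N → MvPolynomial (Fin n) ℝ)
    (h : ∑ i, p i ^ 2 = 0) (i : Fin N) : p i = 0 := by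
  apply MvPolynomial.funext
  intro x
  have hx := congrArg (eval x) h
  simp only [map_sum, map_pow, map_zero] at hx
  rw [Finset.sum_eq_zero_iff_of_nonneg fun _ _ => sq_nonneg _] at hx
  simpa using hx i (Finset.mem_univ i)

lemma totalDegree_le_of_sum_sq {n N d : ℕ} (p : Fin N → MvPolynomial (Fin n) ℝ)
    (hdeg : (∑ i, p i ^ 2).totalDegree ≤ 2 * d) (i : Fin N) : (p i).totalDegree ≤ d := by
  -- Descent on a common degree bound `d + k`.
  have key : ∀ k, (∀ i, (p i).totalDegree ≤ d + k) → ∀ i, (p i).totalDegree ≤ d := by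
    intro k
    induction k with
    | zero => exact fun h => h
    | succ k ih =>
      intro hk
      refine ih fun i => ?_
      have hz : ∑ i, homogeneousComponent (d + (k + 1)) (p i) ^ 2 = 0 := by
        rw [← homogeneousComponent_eq_zero (2 * (d + (k + 1))) (∑ i, p i ^ 2) (by omega), map_sum]
        exact Finset.sum_congr rfl fun i _ =>
          (homogeneousComponent_two_mul_sq (by omega) (p i) (hk i)).symm
      have hi := eq_zero_of_sum_sq_eq_zero _ hz i
      refine Nat.le_of_lt_succ ?_
      rw [Nat.succ_eq_add_one, totalDegree, Finset.sup_lt_iff (Nat.succ_pos _)]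
      intro s hs
      have hle : s.degree ≤ d + (k + 1) := (le_totalDegree hs).trans (hk i)
      refine lt_of_le_of_ne hle fun (he : s.degree = d + (k + 1)) => ?_
      have hc := congrArg (coeff s) hi
      rw [coeff_homogeneousComponent, if_pos he, coeff_zero] at hc
      exact (mem_support_iff.mp hs) hc
  refine key (∑ j, (p j).totalDegree) (fun j => ?_) i
  exact (Finset.single_le_sum (f := fun j => (p j).totalDegree) (fun _ _ => Nat.zero_le _)
    (Finset.mem_univ j)).trans (Nat.le_add_left _ _)

/-- Let `G` be a subgroup of the symmetric group on `{1,…,n}` acting on `ℝ[x₁,…,xₙ]` by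
permuting variables, and let `f` be `G`-invariant of degree at most `2d`.  If `f` is a sum
of squares, then `f` admits a positive semidefinite Gram matrix `Q`, indexed by the
monomials of degree at most `d`, that is invariant under the induced action of `G` on its
indices: `Q_{g·m, g·m'} = Q_{m,m'}`. -/
theorem invariant_sos_has_invariant_gram_matrix
    (n d : ℕ) (G : Subgroup (Equiv.Perm (Fin n)))
    (f : MvPolynomial (Fin n) ℝ)
    (hdeg : f.totalDegree ≤ 2 * d)
    (hinv : ∀ g ∈ G, rename (⇑g) f = f)
    (hsos : ∃ (N : ℕ) (p : Fin N → MvPolynomial (Fin n) ℝ), f = ∑ i, (p i)^2) :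
    ∃ Q : Matrix (MonIdx n d) (MonIdx n d) ℝ, Q.PosSemidef ∧
      f = ∑ m : MonIdx n d, ∑ m' : MonIdx n d, C (Q m m') * monOf m * monOf m' ∧
      ∀ g ∈ G, ∀ m m' : MonIdx n d, Q (permMon g m) (permMon g m') = Q m m' := by
  classical
  obtain ⟨N, p, rfl⟩ := hsos
  have hp : ∀ i, (p i).totalDegree ≤ d := totalDegree_le_of_sum_sq p hdeg
  let a : G → Fin N → MonIdx n d → ℝ := fun g i m => coeff (permMon g.1 m).toFinsupp (p i)
  let c : ℝ := (Fintype.card G : ℝ)⁻¹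
  let Q : Matrix (MonIdx n d) (MonIdx n d) ℝ :=
    c • ∑ g : G, ∑ i, Matrix.vecMulVec (a g i) (star (a g i))
  have hQ : ∀ m m', Q m m' = c * ∑ g : G, ∑ i, a g i m * a g i m' := by
    intro m m'
    simp [Q, Matrix.sum_apply, Matrix.vecMulVec_apply]
  refine ⟨Q, ?_, ?_, ?_⟩
  · refine Matrix.PosSemidef.smul ?_ (by positivity)
    exact Matrix.posSemidef_sum _ fun g _ => Matrix.posSemidef_sum _ fun i _ =>
      Matrix.posSemidef_vecMulVec_self_star _
  · -- Each `g` contributes `g⁻¹ · f = f` to the average.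
    have hg : ∀ g : G, ∑ i, (∑ m, C (a g i m) * monOf m) ^ 2 = ∑ i, p i ^ 2 := by
      intro g
      rw [← hinv _ (G.inv_mem g.2), map_sum]
      refine Finset.sum_congr rfl fun i _ => ?_
      rw [map_pow, ← sum_coeff_permMon_mul_monOf g.1 (p i) (hp i)]
    have hc : c * (Fintype.card G : ℝ) = 1 :=
      inv_mul_cancel₀ (Nat.cast_ne_zero.mpr Fintype.card_ne_zero)
    symm
    calc ∑ m, ∑ m', C (Q m m') * monOf m * monOf m'
        = C c * ∑ g : G, ∑ i, (∑ m, C (a g i m) * monOf m) ^ 2 := by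
          simp only [hQ, sq, map_mul, map_sum, Finset.mul_sum, Finset.sum_mul]
          simp_rw [Finset.sum_comm (γ := G), Finset.sum_comm (γ := Fin N)]
          refine Finset.sum_congr rfl fun g _ => Finset.sum_congr rfl fun i _ =>
            Finset.sum_congr rfl fun m _ => Finset.sum_congr rfl fun m' _ => ?_
          ring
      _ = ∑ i, p i ^ 2 := by
          rw [Finset.sum_congr rfl fun g _ => hg g, Finset.sum_const, Finset.card_univ,
            nsmul_eq_mul, ← mul_assoc, ← map_natCast (C (σ := Fin n) (R := ℝ)), ← map_mul, hc,
            map_one, one_mul]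
  · intro h hh m m'
    rw [hQ, hQ]
    congr 1
    exact Equiv.sum_comp (Equiv.mulRight (⟨h, hh⟩ : G)) fun g => ∑ i, a g i m * a g i m'
end

section
/- Let G be a subgroup of the symmetric group on {1,…,n}, acting on ℝ[x₁,…,xₙ] by permuting the variables, and let f ∈ ℝ[x₁,…,xₙ] be G-invariant. If f is a sum of squares of polynomials, then there exist N and polynomials q₁,…,q_N ∈ ℝ[x₁,…,xₙ] with f = Σ_{j=1}^N q_j² such that for every g ∈ G there is a real orthogonal N×N matrix M(g) with g·q_j = Σ_{k=1}^N M(g)_{jk} q_k for all j; in particular, the linear span of {q₁,…,q_N} is invariant under the group action, so f − f^{sos}-type invariant SOS polynomials decompose into squares of invariant and semi-invariant polynomials. -/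
open MvPolynomial Matrix

/-! The invariant polynomial `f` equals its average over `G`, so from `f = ∑ᵢ pᵢ²` one gets
`f = ∑_{(h, i)} (|G|^{-1/2} • h·pᵢ)²`, summed over `G × Fin N`. An element `g ∈ G` sends the
polynomial indexed by `(h, i)` to the one indexed by `(g * h, i)`, so it permutes the family and
`M(g)` can be taken to be a permutation matrix, which is orthogonal. -/

/-- Let `G` be a subgroup of the symmetric group on `{1,…,n}` acting on `ℝ[x₁,…,xₙ]` by
permuting variables, and let `f` be `G`-invariant.  If `f` is a sum of squares, then `f`
has a sum of squares decomposition `f = Σⱼ qⱼ²` whose family of squares transforms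
orthogonally under the group: for every `g ∈ G` there is a real orthogonal matrix `M(g)`
with `g·qⱼ = Σₖ M(g)ⱼₖ qₖ`.  In particular the linear span of `{q₁,…,q_N}` is invariant
under the group action, so an invariant SOS polynomial decomposes into squares of
invariant and semi-invariant polynomials. -/
theorem invariant_sos_has_equivariant_decomposition
    (n : ℕ) (G : Subgroup (Equiv.Perm (Fin n)))
    (f : MvPolynomial (Fin n) ℝ)
    (hinv : ∀ g ∈ G, rename (⇑g) f = f)
    (hsos : ∃ (N : ℕ) (p : Fin N → MvPolynomial (Fin n) ℝ), f = ∑ i, (p i)^2) :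
    ∃ (N : ℕ) (q : Fin N → MvPolynomial (Fin n) ℝ),
      f = ∑ j, (q j)^2 ∧
      ∀ g ∈ G, ∃ M : Matrix (Fin N) (Fin N) ℝ,
        Mᵀ * M = 1 ∧ ∀ j, rename (⇑g) (q j) = ∑ k, C (M j k) * q k := by
  classical
  obtain ⟨N, p, hp⟩ := hsos
  let e : (G × Fin N) ≃ Fin (Fintype.card (G × Fin N)) := Fintype.equivFin _
  let c : ℝ := Real.sqrt ((Fintype.card G : ℝ)⁻¹)
  have hc : c ^ 2 * (Fintype.card G : ℝ) = 1 := by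
    have h0 : (Fintype.card G : ℝ) ≠ 0 := by exact_mod_cast Fintype.card_ne_zero
    rw [Real.sq_sqrt (by positivity), inv_mul_cancel₀ h0]
  let r : G × Fin N → MvPolynomial (Fin n) ℝ := fun x => C c * rename (⇑x.1.1) (p x.2)
  refine ⟨_, fun j => r (e.symm j), ?_, ?_⟩
  · rw [Equiv.sum_comp e.symm (fun x => r x ^ 2), Fintype.sum_prod_type]
    have h1 : ∀ h : G, ∑ i, r (h, i) ^ 2 = C (c ^ 2) * f := by
      intro h
      rw [← hinv h.1 h.2, hp, map_sum, Finset.mul_sum]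
      refine Finset.sum_congr rfl fun i _ => ?_
      simp only [r, map_pow, mul_pow]
    simp only [h1, Finset.sum_const, Finset.card_univ, nsmul_eq_mul]
    rw [← map_natCast (C : ℝ →+* MvPolynomial (Fin n) ℝ), ← mul_assoc, ← C_mul, mul_comm _ (c ^ 2),
      hc, C_1, one_mul]
  · intro g hg
    -- left translation by `g` on the first component, transported to `Fin (card (G × Fin N))`
    let σ : Equiv.Perm (Fin (Fintype.card (G × Fin N))) :=
      e.symm.trans (((Equiv.mulLeft (⟨g, hg⟩ : G)).prodCongr (Equiv.refl _)).trans e)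
    refine ⟨σ.permMatrix ℝ, ?_, fun j => ?_⟩
    · rw [Matrix.transpose_permMatrix, ← Matrix.permMatrix_mul]
      simp
    · have hσ : rename (⇑g) (r (e.symm j)) = r (e.symm (σ j)) := by
        simp [r, σ, rename_rename]
      rw [hσ]
      simp [Equiv.Perm.permMatrix, PEquiv.toMatrix_apply, apply_ite C, ite_mul]
end

section
/- Let B(x;y) = x₁²y₁² + x₂²y₂² + x₃²y₃² − 2(x₁x₂y₁y₂ + x₂x₃y₂y₃ + x₃x₁y₃y₁) + x₁²y₂² + x₂²y₃² + x₃²y₁² be the (modified Choi) biquadratic form in the six variables x₁,x₂,x₃,y₁,y₂,y₃. Then the polynomial f(x;y) := (x₁² + x₂² + x₃² + y₁² + y₂² + y₃²) · B(x;y) is a sum of squares of polynomials in ℝ[x₁,x₂,x₃,y₁,y₂,y₃]. -/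
/-!
The polynomial splits by bidegree into `|x|² B` and `|y|² B`. The form `B` is invariant under
`(x₁, x₂, x₃; y₁, y₂, y₃) ↦ (y₁, y₃, y₂; x₁, x₃, x₂)`, which exchanges the two parts, so a sum of
squares for `|x|² B` is enough (`normSq_mul_choi_eq`).

Such a representation comes from a Gram matrix for `|x|² B` in the monomials `xᵢ xⱼ yₖ`. Invariance
under sign changes and cyclic shifts reduces the Gram matrix to one block repeated three times and
one circulant `3 × 3` block. With `x = (a, b, c)`, `y = (p, q, r)` the result is
`|x|² B = ∑_cyc (e² + e d + d²) + (u² + v² + w² - u v - v w - w u)`, where `e = a²p - acr`,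
`d = c²p - abq` and `(u, v, w) = (bcp, acq, abr)`. Each bracket becomes a sum of two squares by
completing the square, which uses the constants `1/2` and `√3/2`.
-/

open MvPolynomial

/-- The modified Choi biquadratic form, as a polynomial in six variables
`x₁ = X 0, x₂ = X 1, x₃ = X 2, y₁ = X 3, y₂ = X 4, y₃ = X 5`. -/
noncomputable def choiB : MvPolynomial (Fin 6) ℝ :=
  (X 0)^2*(X 3)^2 + (X 1)^2*(X 4)^2 + (X 2)^2*(X 5)^2
    - 2*(X 0 * X 1 * X 3 * X 4 + X 1 * X 2 * X 4 * X 5 + X 2 * X 0 * X 5 * X 3)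
    + (X 0)^2*(X 4)^2 + (X 1)^2*(X 5)^2 + (X 2)^2*(X 3)^2

/-- The eight cubics whose squares add up to `|x|² B` for `x = (a, b, c)`, `y = (p, q, r)`, when
`h = 1/2` and `s = √3/2`. The first three pairs complete the square in `e² + e d + d²`, the last
one in the circulant part. -/
def choiSquares {R : Type*} [CommRing R] (h s a b c p q r : R) : Fin 8 → R :=
  ![(a ^ 2 * p - a * c * r) + h * (c ^ 2 * p - a * b * q), s * (c ^ 2 * p - a * b * q),
    (b ^ 2 * q - b * a * p) + h * (a ^ 2 * q - b * c * r), s * (a ^ 2 * q - b * c * r),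
    (c ^ 2 * r - c * b * q) + h * (b ^ 2 * r - c * a * p), s * (b ^ 2 * r - c * a * p),
    b * c * p - h * (a * c * q + a * b * r), s * (a * c * q - a * b * r)]

lemma normSq_mul_choi_eq {R : Type*} [CommRing R] (h s a b c p q r : R)
    (hh : 2 * h = 1) (hs : s ^ 2 = 3 * h ^ 2) :
    (a ^ 2 + b ^ 2 + c ^ 2) * (a ^ 2 * p ^ 2 + b ^ 2 * q ^ 2 + c ^ 2 * r ^ 2
      - 2 * (a * b * p * q + b * c * q * r + c * a * r * p)
      + a ^ 2 * q ^ 2 + b ^ 2 * r ^ 2 + c ^ 2 * p ^ 2)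
      = ∑ i, choiSquares h s a b c p q r i ^ 2 := by
  -- Completing the square, with `1/2` replaced by `h` and `(√3/2)²` by `s²`.
  have key (e d : R) : (e + h * d) ^ 2 + (s * d) ^ 2 = e ^ 2 + e * d + d ^ 2 := by
    linear_combination d ^ 2 * hs + (e * d + d ^ 2 * (2 * h + 1)) * hh
  have key' (u v w : R) : (u - h * (v + w)) ^ 2 + (s * (v - w)) ^ 2
      = u ^ 2 + v ^ 2 + w ^ 2 - u * v - v * w - w * u := by
    linear_combination (v - w) ^ 2 * hs
      + ((v ^ 2 + w ^ 2 - v * w) * (2 * h + 1) - u * (v + w)) * hh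
  simp only [choiSquares, Fin.sum_univ_eight, Matrix.cons_val]
  linear_combination -key (a ^ 2 * p - a * c * r) (c ^ 2 * p - a * b * q)
    - key (b ^ 2 * q - b * a * p) (a ^ 2 * q - b * c * r)
    - key (c ^ 2 * r - c * b * q) (b ^ 2 * r - c * a * p)
    - key' (b * c * p) (a * c * q) (a * b * r)

/-- The polynomial `(x₁² + x₂² + x₃² + y₁² + y₂² + y₃²)·B(x;y)`, where `B` is the modified Choi
biquadratic form, is a sum of squares of polynomials in `ℝ[x₁,x₂,x₃,y₁,y₂,y₃]`. -/
theorem choi_times_norm_is_sos :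
    ∃ (N : ℕ) (p : Fin N → MvPolynomial (Fin 6) ℝ),
      ((X 0)^2 + (X 1)^2 + (X 2)^2 + (X 3)^2 + (X 4)^2 + (X 5)^2) * choiB
        = ∑ i, (p i)^2 := by
  have hh : 2 * (C (1 / 2) : MvPolynomial (Fin 6) ℝ) = 1 := by
    rw [← map_ofNat C 2, ← C_mul]
    norm_num
  have hs : (C (√3 / 2) : MvPolynomial (Fin 6) ℝ) ^ 2 = 3 * C (1 / 2) ^ 2 := by
    rw [← map_ofNat C 3, ← C_pow, ← C_pow, ← C_mul, div_pow, Real.sq_sqrt (by norm_num)]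
    norm_num
  have hx := normSq_mul_choi_eq _ _ (X 0) (X 1) (X 2) (X 3) (X 4) (X 5) hh hs
  -- The symmetry of `B` that exchanges `x` and `y`.
  have hy := normSq_mul_choi_eq _ _ (X 3) (X 5) (X 4) (X 0) (X 2) (X 1) hh hs
  refine ⟨8 + 8, Fin.append
    (choiSquares (C (1 / 2)) (C (√3 / 2)) (X 0) (X 1) (X 2) (X 3) (X 4) (X 5))
    (choiSquares (C (1 / 2)) (C (√3 / 2)) (X 3) (X 5) (X 4) (X 0) (X 2) (X 1)), ?_⟩
  simp only [Fin.sum_univ_add, Fin.append_left, Fin.append_right]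
  rw [← hx, ← hy, choiB]
  ring
end

section
/- Let B(x;y) = x₁²y₁² + x₂²y₂² + x₃²y₃² − 2(x₁x₂y₁y₂ + x₂x₃y₂y₃ + x₃x₁y₃y₁) + x₁²y₂² + x₂²y₃² + x₃²y₁². Then B(x;y) ≥ 0 for all real values of x₁,x₂,x₃,y₁,y₂,y₃. -/
/-!
For fixed `x` the form is a quadratic form in `y`. Writing `X, Y, Z` for the squares of the `x`'s,
its leading principal minors are `X + Z`, `X² + ZY + ZX` and
`X²Y + Y²Z + Z²X - 3XYZ`, which is nonnegative by AM-GM. Completing squares then gives the claim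
whenever the first two minors are positive. If one of them vanishes, two of the three `x`'s are
zero and the form is visibly a sum of squares.
-/

/-- With `s = X - Z` and `t = Y - Z`, the expression equals `Z (s² - st + t²) + s² t`, so a single
comparison `Z ≤ Y` suffices. -/
lemma cyclic_amgm_of_le {X Y Z : ℝ} (hZ : 0 ≤ Z) (hY : Z ≤ Y) :
    0 ≤ X^2*Y + Y^2*Z + Z^2*X - 3*X*Y*Z := by
  have h1 : 0 ≤ (X - Z)^2 * (Y - Z) := mul_nonneg (sq_nonneg _) (sub_nonneg.2 hY)
  have h2 : 0 ≤ Z * ((X - Z)^2 - (X - Z)*(Y - Z) + (Y - Z)^2) :=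
    mul_nonneg hZ (by nlinarith [sq_nonneg (X - Z - (Y - Z)), sq_nonneg (X - Z), sq_nonneg (Y - Z)])
  linarith

lemma cyclic_amgm {X Y Z : ℝ} (hX : 0 ≤ X) (hY : 0 ≤ Y) (hZ : 0 ≤ Z) :
    0 ≤ X^2*Y + Y^2*Z + Z^2*X - 3*X*Y*Z := by
  -- The expression is cyclic, and one of `Z ≤ Y`, `Y ≤ X`, `X ≤ Z` always holds.
  rcases le_total Z Y with h | h
  · exact cyclic_amgm_of_le hZ h
  rcases le_total Y X with h' | h'
  · linarith [cyclic_amgm_of_le (X := Z) hY h']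
  · linarith [cyclic_amgm_of_le (X := Y) hX (h'.trans h)]

/-- The modified Choi biquadratic form
`B(x;y) = x₁²y₁² + x₂²y₂² + x₃²y₃² − 2(x₁x₂y₁y₂ + x₂x₃y₂y₃ + x₃x₁y₃y₁)
+ x₁²y₂² + x₂²y₃² + x₃²y₁²` is nonnegative for all real values of the six variables. -/
theorem modified_choi_biquadratic_nonneg (x1 x2 x3 y1 y2 y3 : ℝ) :
    x1^2*y1^2 + x2^2*y2^2 + x3^2*y3^2
      - 2*(x1*x2*y1*y2 + x2*x3*y2*y3 + x3*x1*y3*y1)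
      + x1^2*y2^2 + x2^2*y3^2 + x3^2*y1^2 ≥ 0 := by
  by_cases h13 : x1 = 0 ∧ x3 = 0
  · obtain ⟨rfl, rfl⟩ := h13
    ring_nf
    positivity
  by_cases h12 : x1 = 0 ∧ x2 = 0
  · obtain ⟨rfl, rfl⟩ := h12
    ring_nf
    positivity
  have hD1 : 0 < x1^2 + x3^2 := by
    by_cases h : x1 = 0
    · have h3 : x3 ≠ 0 := fun h3 => h13 ⟨h, h3⟩
      positivity
    · positivity
  have hD2 : 0 < x1^4 + x3^2*x2^2 + x3^2*x1^2 := by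
    by_cases h : x1 = 0
    · have h3 : x3 ≠ 0 := fun h3 => h13 ⟨h, h3⟩
      have h2 : x2 ≠ 0 := fun h2 => h12 ⟨h, h2⟩
      positivity
    · positivity
  have hdet := cyclic_amgm (sq_nonneg x1) (sq_nonneg x2) (sq_nonneg x3)
  refine nonneg_of_mul_nonneg_right (a := (x1^2 + x3^2) * (x1^4 + x3^2*x2^2 + x3^2*x1^2)) ?_
    (mul_pos hD1 hD2)
  -- Lagrange's completion of squares, cleared of denominators.
  have key : (x1^2 + x3^2) * (x1^4 + x3^2*x2^2 + x3^2*x1^2) *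
      (x1^2*y1^2 + x2^2*y2^2 + x3^2*y3^2
        - 2*(x1*x2*y1*y2 + x2*x3*y2*y3 + x3*x1*y3*y1)
        + x1^2*y2^2 + x2^2*y3^2 + x3^2*y1^2) =
      (x1^4 + x3^2*x2^2 + x3^2*x1^2) * ((x1^2 + x3^2)*y1 - x1*x2*y2 - x1*x3*y3)^2
      + ((x1^4 + x3^2*x2^2 + x3^2*x1^2)*y2 - (2*x1^2 + x3^2)*x2*x3*y3)^2
      + (x1^2 + x3^2) * ((x1^2)^2*x2^2 + (x2^2)^2*x3^2 + (x3^2)^2*x1^2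
          - 3*x1^2*x2^2*x3^2) * y3^2 := by
    ring
  rw [key]
  exact add_nonneg (add_nonneg (mul_nonneg hD2.le (sq_nonneg _)) (sq_nonneg _))
    (mul_nonneg (mul_nonneg hD1.le hdet) (sq_nonneg _))
end

section
/- The polynomial f(x) = x⁶ − 2x⁴ + 2x², which is a sum of squares of polynomials (f = x² + (x − x³)²) and is invariant under the action x ↦ −x of the group C₂, is NOT a sum of squares of invariant polynomials: there is no finite family of polynomials p₁,…,p_N ∈ ℝ[x] with each pᵢ even (pᵢ(−x) = pᵢ(x)) such that f = Σᵢ pᵢ². -/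
open Polynomial

/-!
An even polynomial has no linear term, so the `x²`-coefficient of its square is
`2 * p₀ * p₂`. As `f(0) = 0`, every square in a decomposition `f = ∑ pᵢ²` vanishes at `0`, hence
each `pᵢ` has zero constant term, and the `x²`-coefficient of `∑ pᵢ²` is `0`, whereas that of
`f` is `2`.
-/

/-- The polynomial `f(x) = x⁶ − 2x⁴ + 2x²`, which is a sum of squares
(`f = (x)² + (x − x³)²`) and is invariant under `x ↦ −x`, is NOT a sum of squares of
invariant (i.e. even) polynomials: there is no finite family `p₁,…,p_N ∈ ℝ[x]` with every
`pᵢ(−x) = pᵢ(x)` and `f = Σᵢ pᵢ²`. -/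
theorem even_sos_poly_not_sos_of_invariants :
    ((X : ℝ[X])^6 - 2*X^4 + 2*X^2 = X^2 + (X - X^3)^2 ∧
      ((X : ℝ[X])^6 - 2*X^4 + 2*X^2).comp (-X) = (X : ℝ[X])^6 - 2*X^4 + 2*X^2) ∧
    ¬ ∃ (N : ℕ) (p : Fin N → ℝ[X]),
        (∀ i, (p i).comp (-X) = p i) ∧
        (X : ℝ[X])^6 - 2*X^4 + 2*X^2 = ∑ i, (p i)^2 := by
  refine ⟨⟨by ring, ?_⟩, ?_⟩
  · simp only [add_comp, sub_comp, mul_comp, pow_comp, X_comp, ofNat_comp]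
    ring
  · rintro ⟨N, p, heven, hsum⟩
    have hone : ∀ i, (p i).coeff 1 = 0 := fun i => by
      -- The derivative of an even polynomial is odd, so it vanishes at `0`.
      have h := congrArg (fun q => eval 0 (derivative q)) (heven i)
      simp [derivative_comp, ← coeff_zero_eq_eval_zero, coeff_derivative] at h
      linarith
    have hzero : ∀ i, (p i).coeff 0 = 0 := fun i => by
      have h := congrArg (eval 0) hsum
      simp only [eval_finsetSum, eval_pow, eval_add, eval_sub, eval_mul, eval_X,
        eval_ofNat] at h
      norm_num at h
      have h' := (Finset.sum_eq_zero_iff_of_nonneg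
        (fun j _ => sq_nonneg (eval 0 (p j)))).1 h.symm i (Finset.mem_univ i)
      rw [coeff_zero_eq_eval_zero]
      exact pow_eq_zero_iff two_ne_zero |>.1 h'
    have htwo : ∀ i, ((p i) ^ 2).coeff 2 = 0 := fun i => by
      rw [sq, coeff_mul, Finset.Nat.sum_antidiagonal_eq_sum_range_succ_mk]
      simp [Finset.sum_range_succ, hone, hzero]
    have h := congrArg (fun q => q.coeff 2) hsum
    simp only [finsetSum_coeff, htwo, Finset.sum_const_zero] at h
    simp [coeff_X_pow, coeff_ofNat_mul] at h
end

section
/- For all real numbers x, y, z, the symmetric quartic polynomial f(x,y,z) = x⁴ + y⁴ + z⁴ − 4xyz + x + y + z satisfies f(x,y,z) ≥ −2113/1000; equivalently, the polynomial x⁴ + y⁴ + z⁴ − 4xyz + x + y + z + 2113/1000 is nonnegative on ℝ³ (it is in fact a sum of squares of polynomials). -/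
open MvPolynomial

/-!
Write `s = x + y + z` and `e = xy + yz + zx`. The symmetric polynomial `f + 2113/1000` is sought
in the form `Q(1, s, s², e) + ∑ (x - y)² R(1, s, z)`, where `Q` and `R` are positive semidefinite
quadratic forms and the sum runs over the three pairs of variables, `z` being the remaining one.
The two terms are the blocks of an `S₃`-invariant Gram matrix that belong to the trivial and to the
standard representation. Comparing coefficients leaves a five-parameter family of pairs `(Q, R)`.
A rational point close to its analytic center makes both forms positive definite, and the `LDLᵀ`
decompositions of `Q` and `R` turn the representation into a sum of `4 + 3 · 3` squares with
positive rational weights, which is `quartic_eq_weighted_squares`.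

Moving the square roots of the weights into the squares gives the sum of squares of polynomials;
evaluating it gives the pointwise bounds.
-/

/-- The pivots (diagonal of `D`) in the `LDLᵀ` decomposition of the form `Q`. -/
noncomputable def trivialPivot : Fin 4 → ℝ :=
  ![2113/1000, 55131299/211300000, 3259736472647/444607250000000,
    11292250629901477/218271954208443120000]

/-- The pivots (diagonal of `D`) in the `LDLᵀ` decomposition of the form `R`. -/
noncomputable def standardPivot : Fin 3 → ℝ :=
  ![280143/1000000, 2712311179/6225400000, 39381535559/10984860274950000]

/-- The first elementary symmetric polynomial in three variables. -/
noncomputable def s : MvPolynomial (Fin 3) ℝ := X 0 + X 1 + X 2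

/-- The second elementary symmetric polynomial in three variables. -/
noncomputable def e : MvPolynomial (Fin 3) ℝ := X 0 * X 1 + X 1 * X 2 + X 2 * X 0

/-- The linear forms (rows of `Lᵀ`) in the decomposition of `Q`, taken at `(1, s, s², e)`. -/
noncomputable def trivialForm : Fin 4 → MvPolynomial (Fin 3) ℝ :=
  ![1 + C (500/2113) * s - C (234879/1056500) * s ^ 2 + C (840429/2113000) * e,
    s + C (1816533/8892145) * s ^ 2 - C (2353536871/2480908455) * e,
    s ^ 2 + C (90008267643827/58675256507646) * e,
    e]

/-- The linear forms (rows of `Lᵀ`) in the decomposition of `R`, taken at `(1, s, z)` and multiplied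
by the difference of the two variables other than `z`, where `z = X l`; indices are cyclic in
`Fin 3`. -/
noncomputable def standardForm (l : Fin 3) : Fin 3 → MvPolynomial (Fin 3) ℝ :=
  ![(X (l + 1) - X (l + 2)) * (1 + C (9643/93381) * s + C (2000000/2521287) * X l),
    (X (l + 1) - X (l + 2)) * (s - C (80810894623/73232401833) * X l),
    (X (l + 1) - X (l + 2)) * X l]

theorem trivialPivot_nonneg (k : Fin 4) : 0 ≤ trivialPivot k := by
  fin_cases k <;> norm_num [trivialPivot]

theorem standardPivot_nonneg (k : Fin 3) : 0 ≤ standardPivot k := by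
  fin_cases k <;> norm_num [standardPivot]

theorem quartic_eq_weighted_squares :
    ((X 0)^4 + (X 1)^4 + (X 2)^4 - 4 * X 0 * X 1 * X 2 + X 0 + X 1 + X 2
        + C (2113/1000 : ℝ) : MvPolynomial (Fin 3) ℝ) =
      ∑ k, C (trivialPivot k) * trivialForm k ^ 2 +
        ∑ l, ∑ k, C (standardPivot k) * standardForm l k ^ 2 := by
  have h11 : (1 + 1 : Fin 3) = 2 := rfl
  have h12 : (1 + 2 : Fin 3) = 0 := rfl
  have h21 : (2 + 1 : Fin 3) = 0 := rfl
  have h22 : (2 + 2 : Fin 3) = 1 := rfl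
  -- Over the infinite field `ℝ` it suffices to compare the values of both sides.
  apply MvPolynomial.funext
  intro v
  have h4 : eval v (4 : MvPolynomial (Fin 3) ℝ) = 4 := map_ofNat (eval v) 4
  simp only [Fin.sum_univ_four, Fin.sum_univ_three, trivialPivot, standardPivot, trivialForm,
    standardForm, s, e, Matrix.cons_val, map_add, map_sub, map_mul, map_pow, map_one, eval_X,
    eval_C, h4, h11, h12, h21, h22, zero_add]
  ring

/-- The weights are nonnegative, so their square roots can be absorbed into the squares. -/
theorem quartic_isSumOfSquares :
    ∃ (N : ℕ) (p : Fin N → MvPolynomial (Fin 3) ℝ),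
      (X 0)^4 + (X 1)^4 + (X 2)^4 - 4 * X 0 * X 1 * X 2 + X 0 + X 1 + X 2
        + C (2113/1000 : ℝ) = ∑ i, (p i)^2 := by
  have absorb {w : ℝ} (hw : 0 ≤ w) (g : MvPolynomial (Fin 3) ℝ) :
      (C √w * g) ^ 2 = C w * g ^ 2 := by
    rw [mul_pow, ← C_pow, Real.sq_sqrt hw]
  let q : Fin 4 ⊕ Fin 3 × Fin 3 → MvPolynomial (Fin 3) ℝ :=
    Sum.elim (fun k => C √(trivialPivot k) * trivialForm k)
      (fun lk => C √(standardPivot lk.2) * standardForm lk.1 lk.2)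
  refine ⟨_, q ∘ (Fintype.equivFin _).symm, ?_⟩
  simp only [Function.comp_apply]
  rw [Equiv.sum_comp (Fintype.equivFin _).symm (fun i => q i ^ 2), Fintype.sum_sum_type,
    Fintype.sum_prod_type, quartic_eq_weighted_squares]
  simp only [q, Sum.elim_inl, Sum.elim_inr, absorb (trivialPivot_nonneg _),
    absorb (standardPivot_nonneg _)]

theorem quartic_add_nonneg (x y z : ℝ) :
    0 ≤ x^4 + y^4 + z^4 - 4*x*y*z + x + y + z + 2113/1000 := by
  obtain ⟨N, p, hp⟩ := quartic_isSumOfSquares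
  have h := congrArg (eval ![x, y, z]) hp
  have h4 : eval ![x, y, z] (4 : MvPolynomial (Fin 3) ℝ) = 4 := map_ofNat _ 4
  simp only [map_add, map_sub, map_mul, map_pow, map_sum, eval_X, eval_C, h4,
    Matrix.cons_val] at h
  rw [h]
  exact Finset.sum_nonneg fun i _ => sq_nonneg _

/-- The symmetric quartic `f(x,y,z) = x⁴ + y⁴ + z⁴ − 4xyz + x + y + z` satisfies
`f(x,y,z) ≥ −2113/1000` for all real `x, y, z`; equivalently,
`f + 2113/1000` is nonnegative on `ℝ³`, and it is in fact a sum of squares of polynomials. -/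
theorem symmetric_quartic_lower_bound :
    (∀ x y z : ℝ,
      x^4 + y^4 + z^4 - 4*x*y*z + x + y + z ≥ -2113/1000) ∧
    (∀ x y z : ℝ,
      x^4 + y^4 + z^4 - 4*x*y*z + x + y + z + 2113/1000 ≥ 0) ∧
    (∃ (N : ℕ) (p : Fin N → MvPolynomial (Fin 3) ℝ),
      (X 0)^4 + (X 1)^4 + (X 2)^4 - 4 * X 0 * X 1 * X 2 + X 0 + X 1 + X 2
        + C (2113/1000 : ℝ) = ∑ i, (p i)^2) := by
  refine ⟨fun x y z => ?_, quartic_add_nonneg, quartic_isSumOfSquares⟩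
  linarith [quartic_add_nonneg x y z]
end
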